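/- Let a ≥ 8 be an integer with the property that for every real ε with 0 < ε ≤ 1/2, every P5-free graph G with ω(G) ≥ 2 contains either an anticomplete pair (A,B) with ρ(A), ρ(B) ≥ (1−ε)·ρ(G), or a complete pair (X,Y) with ρ(X) ≥ ε^a·ρ(G) and ρ(Y) ≥ 2^{−a}·ρ(G), or a complete blockade (B_1,…,B_k) with k ≥ 1/ε and ρ(B_i) ≥ k^{−a}·ρ(G) for all i ∈ [k]. Then for every integer s ≥ 0, every P5-free graph G with ω(G) ≥ 2 contains either: (i) an anticomplete pair (A,B) with ρ(A), ρ(B) ≥ (1−2^{1−2^{s+1}})·ρ(G); or (ii) a complete pair (X,Y) with ρ(X) ≥ φ_{r,s}·2^{−2^{r+3}}·ρ(G) and ρ(Y) ≥ φ_{r,s}·(1−(5/2)·2^{−2^r})·ρ(G) for some integer r with 1 ≤ r ≤ s; or (iii) a complete blockade (B_1,…,B_k) with k ≥ 2 and ρ(B_i) ≥ φ_s·k^{−a}·ρ(G) for all i ∈ [k]. -/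

import Mathlib

/-!
The proof is by induction on `s`. For `s = 0` the hypothesis is used with `ε = 1/2`; a complete pair
is a blockade of length two.

For the step from `t` to `t + 1` put `δ = 2 ^ (-2 ^ (t + 1))` and `R = ρ(G)`, so that the error
terms of the new anticomplete pair and of the new complete pair are `2 δ²` and `(δ⁸, (5/2) δ)`.
Suppose that none of the three outcomes holds. Applying the induction hypothesis to an induced
subgraph `F` with `ρ(F) ≥ (1 - δ²) R`, a complete pair or a blockade in `F` would be one in `G`, since
`φ (t + 1) = (1 - δ²) φ t`; so `F` contains an anticomplete pair of Hall ratios at least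
`(1 - 2 δ)(1 - δ²) R ≥ (1 - (5/2) δ) R =: τ`. Moreover a set complete to a set of Hall ratio at
least `τ` has Hall ratio below `δ⁸ R`.

Call a connected set `C` with `ρ(C) ≥ (1 - δ²) R` good (`Good`) if every vertex outside `C` with a
neighbour in `C` is complete to `C`, or complete to a connected set `B` with `ρ(B) ≥ τ` that is
anticomplete to `C`. A component of `G` of maximum Hall ratio is good; let `C` be a good set of
minimum size, and `N(C)` the set of vertices outside `C` with a neighbour in `C`.

* `N(C)` has Hall ratio at most `2 δ⁶ R + δ⁸ R` (`P5Free.rhoSub_mixed_le`). A vertex of a `P₅`-free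
  graph with neighbours in two anticomplete connected sets is complete to one of them. Hence the
  vertices of `N(C)` not complete to `C` are covered by the sets `N K` of vertices complete to `K`,
  where `K` runs over the components of `G \ (C ∪ N(C))` with `ρ(K) ≥ τ`. Each `N K` has small Hall
  ratio, so if the bound fails, a maximisation (`exists_private`) produces `k ≥ 1/δ` sets `N K` with
  private parts of Hall ratio at least `R / k⁸`. Excluding `P₅` makes different private parts
  complete to each other (`P5Free.adj_of_private`), which yields a complete blockade.
* `C` contains an anticomplete pair of Hall ratios at least `τ`, and this gives a separator `S` of
  `G[C]`, each vertex of which is complete to one of two components `A'`, `B'` of `G[C \ S]` of Hall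
  ratio at least `τ` (`P5Free.exists_separator`). So `ρ(S) ≤ 2 δ⁸ R`.

Thus `G \ (N(C) ∪ S)` has Hall ratio at least `(1 - δ²) R`, and so does some component `E` of it. If
`E` is outside `C`, then `(E, C)` is an anticomplete pair as in the first outcome. Otherwise `E` is a
proper subset of `C`, and it is good, as `A'` and `B'` are each equal or anticomplete to `E`. This
contradicts the choice of `C`.
-/

open SimpleGraph

/-- The five-vertex path `P₅`. -/
def P5 : SimpleGraph (Fin 5) := SimpleGraph.fromRel (fun i j => (i : ℕ) + 1 = (j : ℕ))

/-- A graph is `P₅`-free if it contains no induced copy of `P5`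
(equivalently, no graph embedding of `P5`). -/
def P5Free {V : Type*} (G : SimpleGraph V) : Prop := IsEmpty (P5 ↪g G)

/-- A graph is `T`-free if it contains no induced copy of `T`. -/
def TFree {W V : Type*} (T : SimpleGraph W) (G : SimpleGraph V) : Prop := IsEmpty (T ↪g G)

/-- A stable (independent) set of vertices. -/
def IsStableSet {V : Type*} (G : SimpleGraph V) (s : Finset V) : Prop :=
  ∀ ⦃u⦄, u ∈ s → ∀ ⦃v⦄, v ∈ s → ¬ G.Adj u v

/-- The stability number `α(G)`. -/
noncomputable def alphaNum {V : Type*} [Fintype V] (G : SimpleGraph V) : ℕ :=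
  sSup {n | ∃ s : Finset V, IsStableSet G s ∧ s.card = n}

/-- The clique number `ω(G)`. -/
noncomputable def omegaNum {V : Type*} [Fintype V] (G : SimpleGraph V) : ℕ :=
  sSup {n | ∃ s : Finset V, G.IsClique (s : Set V) ∧ s.card = n}

/-- `ψ(G) = |G| / α(G)` (and `0` for the null graph). -/
noncomputable def psi {V : Type*} [Fintype V] (G : SimpleGraph V) : ℝ :=
  if Fintype.card V = 0 then 0 else (Fintype.card V : ℝ) / (alphaNum G : ℝ)

/-- `ψ(S)` for a vertex subset `S`, i.e. `ψ(G[S])`. -/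
noncomputable def psiSub {V : Type*} [Fintype V] (G : SimpleGraph V) (s : Finset V) : ℝ :=
  psi (G.induce (↑s : Set V))

/-- The Hall ratio `ρ(G)`: the maximum of `ψ(F)` over induced subgraphs `F` of `G`. -/
noncomputable def rho {V : Type*} [Fintype V] (G : SimpleGraph V) : ℝ :=
  ⨆ s : Finset V, psiSub G s

/-- `ρ(S)` for a vertex subset `S`, i.e. `ρ(G[S])`. -/
noncomputable def rhoSub {V : Type*} [Fintype V] (G : SimpleGraph V) (s : Finset V) : ℝ :=
  rho (G.induce (↑s : Set V))

/-- `(A, B)` is a complete pair: disjoint, with every vertex of `A` adjacent to every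
vertex of `B`. -/
def CompletePair {V : Type*} (G : SimpleGraph V) (A B : Finset V) : Prop :=
  Disjoint A B ∧ ∀ a ∈ A, ∀ b ∈ B, G.Adj a b

/-- `(A, B)` is an anticomplete pair: disjoint, with no edges between `A` and `B`. -/
def AnticompletePair {V : Type*} (G : SimpleGraph V) (A B : Finset V) : Prop :=
  Disjoint A B ∧ ∀ a ∈ A, ∀ b ∈ B, ¬ G.Adj a b

/-- A complete blockade: pairwise disjoint sets, pairwise complete to each other. -/
def CompleteBlockade {V : Type*} (G : SimpleGraph V) {k : ℕ} (B : Fin k → Finset V) : Prop :=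
  (∀ i j, i ≠ j → Disjoint (B i) (B j)) ∧
  (∀ i j, i ≠ j → ∀ a ∈ B i, ∀ b ∈ B j, G.Adj a b)

/-- An anticomplete blockade: pairwise disjoint sets, pairwise anticomplete to each other. -/
def AnticompleteBlockade {V : Type*} (G : SimpleGraph V) {k : ℕ} (B : Fin k → Finset V) : Prop :=
  (∀ i j, i ≠ j → Disjoint (B i) (B j)) ∧
  (∀ i j, i ≠ j → ∀ a ∈ B i, ∀ b ∈ B j, ¬ G.Adj a b)

/-- The fractional chromatic number `χ*(G)`: the least `q ≥ 0` for which there are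
nonnegative weights on the stable sets summing to `q` that cover every vertex with
total weight at least `1`. -/
noncomputable def fracChrom {V : Type*} [Fintype V] [DecidableEq V] (G : SimpleGraph V) : ℝ :=
  sInf {q : ℝ | 0 ≤ q ∧ ∃ x : Finset V → ℝ,
    (∀ s, 0 ≤ x s) ∧ (∀ s, ¬ IsStableSet G s → x s = 0) ∧
    (∑ s : Finset V, x s) = q ∧
    ∀ v : V, 1 ≤ ∑ s ∈ Finset.univ.filter (fun s : Finset V => v ∈ s), x s}

/-- `G` is `ε`-sparse: every vertex has degree at most `ε·|G|`. -/
def EpsSparse {V : Type*} [Fintype V] (ε : ℝ) (G : SimpleGraph V) : Prop :=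
  ∀ v : V, ((G.neighborSet v).ncard : ℝ) ≤ ε * (Fintype.card V : ℝ)

/-- `G` is `(1-ε)`-dense: the complement of `G` is `ε`-sparse. -/
def OneSubEpsDense {V : Type*} [Fintype V] (ε : ℝ) (G : SimpleGraph V) : Prop :=
  EpsSparse ε Gᶜ

/-- `G` is `ε`-restricted: `ε`-sparse or `(1-ε)`-dense. -/
def EpsRestricted {V : Type*} [Fintype V] (ε : ℝ) (G : SimpleGraph V) : Prop :=
  EpsSparse ε G ∨ OneSubEpsDense ε G

/-- `G` is `(p,q)`-sparse: every induced subgraph `F` with `ρ(F) ≥ q` contains an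
anticomplete pair `(X,Y)` with `ρ(X), ρ(Y) ≥ p`. -/
def PQSparse {V : Type*} [Fintype V] (G : SimpleGraph V) (p q : ℝ) : Prop :=
  ∀ s : Finset V, q ≤ rhoSub G s →
    ∃ X Y : Finset V, X ⊆ s ∧ Y ⊆ s ∧ AnticompletePair G X Y ∧
      p ≤ rhoSub G X ∧ p ≤ rhoSub G Y

/-- `φ_s = ∏_{i=1}^{s} (1 - 2^{-2^{i+1}})` (so `φ_0 = 1`). -/
noncomputable def phi (s : ℕ) : ℝ :=
  ∏ i ∈ Finset.Icc 1 s, (1 - ((2:ℝ) ^ (2 ^ (i+1)))⁻¹)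

/-- `φ_{r,s} = φ_s / φ_r`. -/
noncomputable def phiRS (r s : ℕ) : ℝ := phi s / phi r

/-! ### Basic properties of the Hall ratio -/

section HallRatio

variable {V W : Type}

/-- `α(G[S])` for a vertex subset `S`. -/
noncomputable def alphaSub (G : SimpleGraph V) (S : Finset V) : ℕ :=
  alphaNum (G.induce (↑S : Set V))

lemma card_le_alphaNum [Fintype V] (G : SimpleGraph V) {s : Finset V} (hs : IsStableSet G s) :
    s.card ≤ alphaNum G := by
  refine le_csSup ⟨Fintype.card V, ?_⟩ ⟨s, hs, rfl⟩
  rintro n ⟨t, -, rfl⟩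
  exact t.card_le_univ

lemma exists_card_eq_alphaNum [Fintype V] (G : SimpleGraph V) :
    ∃ s : Finset V, IsStableSet G s ∧ s.card = alphaNum G := by
  refine Nat.sSup_mem (s := {n | ∃ s : Finset V, IsStableSet G s ∧ s.card = n})
    ⟨0, ∅, by intro u hu; simp at hu, rfl⟩ ⟨Fintype.card V, ?_⟩
  rintro n ⟨t, -, rfl⟩
  exact t.card_le_univ

lemma card_le_alphaSub (G : SimpleGraph V) {S T : Finset V} (hT : IsStableSet G T)
    (hTS : T ⊆ S) : T.card ≤ alphaSub G S := by
  classical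
  have hst : IsStableSet (G.induce (↑S : Set V)) (T.subtype (· ∈ (↑S : Set V))) := by
    intro u hu v hv
    rw [Finset.mem_subtype] at hu hv
    exact hT hu hv
  have hcard : (T.subtype (· ∈ (↑S : Set V))).card = T.card := by
    rw [Finset.card_subtype, Finset.filter_true_of_mem]
    intro x hx
    exact hTS hx
  rw [← hcard]
  exact card_le_alphaNum _ hst

lemma exists_card_eq_alphaSub (G : SimpleGraph V) (S : Finset V) :
    ∃ T ⊆ S, IsStableSet G T ∧ T.card = alphaSub G S := by
  classical
  obtain ⟨t, ht, hc⟩ := exists_card_eq_alphaNum (G.induce (↑S : Set V))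
  refine ⟨t.map (Function.Embedding.subtype _), ?_, ?_, ?_⟩
  · intro x hx
    obtain ⟨y, -, rfl⟩ := Finset.mem_map.1 hx
    exact y.2
  · intro u hu v hv
    obtain ⟨y, hy, rfl⟩ := Finset.mem_map.1 hu
    obtain ⟨z, hz, rfl⟩ := Finset.mem_map.1 hv
    exact ht hy hz
  · rw [Finset.card_map]; exact hc

lemma alphaSub_mono (G : SimpleGraph V) {S T : Finset V} (h : S ⊆ T) :
    alphaSub G S ≤ alphaSub G T := by
  obtain ⟨A, hA, hs, hc⟩ := exists_card_eq_alphaSub G S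
  rw [← hc]
  exact card_le_alphaSub G hs (hA.trans h)

lemma alphaSub_pos (G : SimpleGraph V) {S : Finset V} (h : S.Nonempty) : 0 < alphaSub G S := by
  obtain ⟨x, hx⟩ := h
  have : ({x} : Finset V).card ≤ alphaSub G S := by
    refine card_le_alphaSub G ?_ (by simpa using hx)
    intro u hu v hv
    rw [Finset.mem_singleton] at hu hv
    subst hu; subst hv
    exact G.irrefl
  rwa [Finset.card_singleton] at this

lemma alphaSub_map {H : SimpleGraph W} {G : SimpleGraph V} (f : H ↪g G) (T : Finset W) :
    alphaSub H T = alphaSub G (T.map f.toEmbedding) := by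
  apply le_antisymm
  · obtain ⟨A, hA, hs, hc⟩ := exists_card_eq_alphaSub H T
    rw [← hc, ← Finset.card_map f.toEmbedding]
    refine card_le_alphaSub G ?_ (Finset.map_subset_map.2 hA)
    intro u hu v hv
    obtain ⟨y, hy, rfl⟩ := Finset.mem_map.1 hu
    obtain ⟨z, hz, rfl⟩ := Finset.mem_map.1 hv
    intro hadj
    exact hs hy hz (f.map_rel_iff.1 hadj)
  · obtain ⟨A, hA, hs, hc⟩ := exists_card_eq_alphaSub G (T.map f.toEmbedding)
    obtain ⟨B, hB, rfl⟩ := Finset.subset_map_iff.1 hA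
    rw [← hc, Finset.card_map]
    refine card_le_alphaSub H ?_ hB
    intro u hu v hv hadj
    exact hs (Finset.mem_map_of_mem _ hu) (Finset.mem_map_of_mem _ hv) (f.map_rel_iff.2 hadj)

variable [Fintype V] [Fintype W]

/-- The case distinction in the definition of `ψ` is absorbed by `0 / 0 = 0`. -/
lemma psiSub_eq (G : SimpleGraph V) (S : Finset V) :
    psiSub G S = (S.card : ℝ) / alphaSub G S := by
  unfold psiSub psi alphaSub
  split_ifs with h
  · have h0 : S.card = 0 := by simpa using h
    simp [h0]
  · congr 2
    simp

lemma psiSub_map {H : SimpleGraph W} {G : SimpleGraph V} (f : H ↪g G) (T : Finset W) :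
    psiSub H T = psiSub G (T.map f.toEmbedding) := by
  rw [psiSub_eq, psiSub_eq, alphaSub_map f, Finset.card_map]

lemma psiSub_le_rho (G : SimpleGraph V) (S : Finset V) : psiSub G S ≤ rho G :=
  le_ciSup (f := fun s : Finset V => psiSub G s) (Set.finite_range _).bddAbove S

lemma exists_psiSub_eq_rho (G : SimpleGraph V) : ∃ S, psiSub G S = rho G :=
  exists_eq_ciSup_of_finite (f := fun s : Finset V => psiSub G s)

lemma psiSub_le_rhoSub (G : SimpleGraph V) {F S : Finset V} (h : F ⊆ S) :
    psiSub G F ≤ rhoSub G S := by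
  classical
  have key := psiSub_le_rho (G.induce (↑S : Set V)) (F.subtype (· ∈ (↑S : Set V)))
  rw [psiSub_map (SimpleGraph.Embedding.induce (G := G) (↑S : Set V))] at key
  have : (F.subtype (· ∈ (↑S : Set V))).map
      (SimpleGraph.Embedding.induce (G := G) (↑S : Set V)).toEmbedding = F := by
    exact Finset.subtype_map_of_mem (fun x hx => h hx)
  rw [this] at key
  exact key

lemma exists_psiSub_eq_rhoSub (G : SimpleGraph V) (S : Finset V) :
    ∃ F ⊆ S, psiSub G F = rhoSub G S := by
  obtain ⟨T, hT⟩ := exists_psiSub_eq_rho (G.induce (↑S : Set V))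
  rw [psiSub_map (SimpleGraph.Embedding.induce (G := G) (↑S : Set V))] at hT
  refine ⟨_, ?_, hT⟩
  intro x hx
  obtain ⟨y, -, rfl⟩ := Finset.mem_map.1 hx
  exact y.2

lemma rhoSub_mono (G : SimpleGraph V) {S T : Finset V} (h : S ⊆ T) :
    rhoSub G S ≤ rhoSub G T := by
  obtain ⟨F, hF, he⟩ := exists_psiSub_eq_rhoSub G S
  rw [← he]
  exact psiSub_le_rhoSub G (hF.trans h)

lemma rho_eq_rhoSub_univ (G : SimpleGraph V) : rho G = rhoSub G Finset.univ := by
  apply le_antisymm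
  · obtain ⟨F, he⟩ := exists_psiSub_eq_rho G
    rw [← he]
    exact psiSub_le_rhoSub G (Finset.subset_univ _)
  · obtain ⟨F, -, he⟩ := exists_psiSub_eq_rhoSub G Finset.univ
    rw [← he]
    exact psiSub_le_rho G F

lemma rhoSub_map {H : SimpleGraph W} {G : SimpleGraph V} (f : H ↪g G) (T : Finset W) :
    rhoSub H T = rhoSub G (T.map f.toEmbedding) := by
  apply le_antisymm
  · obtain ⟨F, hF, he⟩ := exists_psiSub_eq_rhoSub H T
    rw [← he, psiSub_map f]
    exact psiSub_le_rhoSub G (Finset.map_subset_map.2 hF)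
  · obtain ⟨F, hF, he⟩ := exists_psiSub_eq_rhoSub G (T.map f.toEmbedding)
    obtain ⟨B, hB, rfl⟩ := Finset.subset_map_iff.1 hF
    rw [← he, ← psiSub_map f]
    exact psiSub_le_rhoSub H hB

lemma rhoSub_nonneg (G : SimpleGraph V) (S : Finset V) : 0 ≤ rhoSub G S := by
  obtain ⟨F, -, he⟩ := exists_psiSub_eq_rhoSub G S
  rw [← he, psiSub_eq]
  positivity

lemma nonempty_of_rhoSub_pos (G : SimpleGraph V) {S : Finset V} (h : 0 < rhoSub G S) :
    S.Nonempty := by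
  rw [Finset.nonempty_iff_ne_empty]
  rintro rfl
  obtain ⟨F, hF, he⟩ := exists_psiSub_eq_rhoSub G ∅
  rw [Finset.subset_empty.1 hF, psiSub_eq] at he
  simp at he
  linarith

lemma card_le_rhoSub_mul (G : SimpleGraph V) {F S : Finset V} (h : F ⊆ S) :
    (F.card : ℝ) ≤ rhoSub G S * alphaSub G F := by
  rcases F.eq_empty_or_nonempty with rfl | hne
  · simpa using mul_nonneg (rhoSub_nonneg G S) (Nat.cast_nonneg _)
  · have := psiSub_le_rhoSub G h
    rw [psiSub_eq, div_le_iff₀ (by exact_mod_cast alphaSub_pos G hne)] at this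
    exact this

/-- To bound `ρ(S)` it suffices to bound `|F|` by `c · α(F)` for every `F ⊆ S`. -/
lemma rhoSub_le (G : SimpleGraph V) {S : Finset V} {c : ℝ} (hc : 0 ≤ c)
    (h : ∀ F ⊆ S, (F.card : ℝ) ≤ c * alphaSub G F) : rhoSub G S ≤ c := by
  obtain ⟨F, hF, he⟩ := exists_psiSub_eq_rhoSub G S
  rw [← he, psiSub_eq]
  exact div_le_of_le_mul₀ (Nat.cast_nonneg _) hc (h F hF)

lemma rhoSub_union_le [DecidableEq V] (G : SimpleGraph V) (S T : Finset V) :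
    rhoSub G (S ∪ T) ≤ rhoSub G S + rhoSub G T := by
  refine rhoSub_le G (add_nonneg (rhoSub_nonneg G S) (rhoSub_nonneg G T)) fun F hF => ?_
  have h1 := card_le_rhoSub_mul G (F := F ∩ S) (S := S) Finset.inter_subset_right
  have h2 := card_le_rhoSub_mul G (F := F ∩ T) (S := T) Finset.inter_subset_right
  have m1 : (alphaSub G (F ∩ S) : ℝ) ≤ alphaSub G F := by
    exact_mod_cast alphaSub_mono G Finset.inter_subset_left
  have m2 : (alphaSub G (F ∩ T) : ℝ) ≤ alphaSub G F := by
    exact_mod_cast alphaSub_mono G Finset.inter_subset_left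
  have hc : (F.card : ℝ) ≤ (F ∩ S).card + (F ∩ T).card := by
    have : F = (F ∩ S) ∪ (F ∩ T) := by
      rw [← Finset.inter_union_distrib_left, Finset.inter_eq_left.2 hF]
    calc (F.card : ℝ) = (((F ∩ S) ∪ (F ∩ T)).card : ℝ) := by rw [← this]
      _ ≤ _ := by exact_mod_cast Finset.card_union_le _ _
  have n1 := mul_le_mul_of_nonneg_left m1 (rhoSub_nonneg G S)
  have n2 := mul_le_mul_of_nonneg_left m2 (rhoSub_nonneg G T)
  rw [add_mul]
  linarith

/-- Stable sets in anticomplete sets can be joined, so `α` adds up and `ρ` is the maximum. -/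
lemma rhoSub_union_le_max [DecidableEq V] (G : SimpleGraph V) {S T : Finset V}
    (h : AnticompletePair G S T) : rhoSub G (S ∪ T) ≤ max (rhoSub G S) (rhoSub G T) := by
  refine rhoSub_le G (le_max_of_le_left (rhoSub_nonneg G S)) fun F hF => ?_
  have h1 := card_le_rhoSub_mul G (F := F ∩ S) (S := S) Finset.inter_subset_right
  have h2 := card_le_rhoSub_mul G (F := F ∩ T) (S := T) Finset.inter_subset_right
  have hFe : (F ∩ S) ∪ (F ∩ T) = F := by
    rw [← Finset.inter_union_distrib_left, Finset.inter_eq_left.2 hF]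
  have hc : (F.card : ℝ) ≤ (F ∩ S).card + (F ∩ T).card := by
    calc (F.card : ℝ) = (((F ∩ S) ∪ (F ∩ T)).card : ℝ) := by rw [hFe]
      _ ≤ _ := by exact_mod_cast Finset.card_union_le _ _
  have hα : (alphaSub G (F ∩ S) : ℝ) + alphaSub G (F ∩ T) ≤ alphaSub G F := by
    obtain ⟨A, hA, hsA, hcA⟩ := exists_card_eq_alphaSub G (F ∩ S)
    obtain ⟨B, hB, hsB, hcB⟩ := exists_card_eq_alphaSub G (F ∩ T)
    have hA' : ∀ x ∈ A, x ∈ S := fun x hx => (Finset.mem_inter.1 (hA hx)).2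
    have hB' : ∀ x ∈ B, x ∈ T := fun x hx => (Finset.mem_inter.1 (hB hx)).2
    have hdis : Disjoint A B := h.1.mono hA' hB'
    have : (A ∪ B).card ≤ alphaSub G F := by
      refine card_le_alphaSub G ?_ ?_
      · intro u hu v hv
        rcases Finset.mem_union.1 hu with hu | hu <;> rcases Finset.mem_union.1 hv with hv | hv
        · exact hsA hu hv
        · exact h.2 u (hA' u hu) v (hB' v hv)
        · exact fun hadj => h.2 v (hA' v hv) u (hB' u hu) hadj.symm
        · exact hsB hu hv
      · rw [← hFe]
        exact Finset.union_subset_union hA hB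
    rw [Finset.card_union_of_disjoint hdis, hcA, hcB] at this
    exact_mod_cast this
  have hS := le_max_left (rhoSub G S) (rhoSub G T)
  have hT := le_max_right (rhoSub G S) (rhoSub G T)
  have hm : 0 ≤ max (rhoSub G S) (rhoSub G T) := le_max_of_le_left (rhoSub_nonneg G S)
  calc (F.card : ℝ)
      ≤ rhoSub G S * alphaSub G (F ∩ S) + rhoSub G T * alphaSub G (F ∩ T) := by linarith
    _ ≤ max (rhoSub G S) (rhoSub G T) * alphaSub G (F ∩ S)
        + max (rhoSub G S) (rhoSub G T) * alphaSub G (F ∩ T) := by gcongr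
    _ ≤ max (rhoSub G S) (rhoSub G T) * alphaSub G F := by
        rw [← mul_add]; gcongr

lemma exists_adj_of_two_le_omegaNum (G : SimpleGraph V) (h : 2 ≤ omegaNum G) :
    ∃ u v, G.Adj u v := by
  have hmem : omegaNum G ∈ {n | ∃ s : Finset V, G.IsClique (s : Set V) ∧ s.card = n} := by
    refine Nat.sSup_mem ⟨0, ∅, by simp, rfl⟩ ⟨Fintype.card V, ?_⟩
    rintro n ⟨t, -, rfl⟩
    exact t.card_le_univ
  obtain ⟨s, hs, hc⟩ := hmem
  obtain ⟨u, hu, v, hv, huv⟩ := Finset.one_lt_card.1 (show 1 < s.card by omega)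
  exact ⟨u, v, hs hu hv huv⟩

lemma two_le_omegaNum_of_adj (G : SimpleGraph V) {u v : V} (h : G.Adj u v) :
    2 ≤ omegaNum G := by
  classical
  refine le_csSup ⟨Fintype.card V, ?_⟩ ⟨{u, v}, ?_, Finset.card_pair h.ne⟩
  · rintro n ⟨t, -, rfl⟩
    exact t.card_le_univ
  · simp [SimpleGraph.isClique_insert, h]

lemma two_le_rho (G : SimpleGraph V) (h : 2 ≤ omegaNum G) : 2 ≤ rho G := by
  classical
  obtain ⟨u, v, huv⟩ := exists_adj_of_two_le_omegaNum G h
  have h1 := card_le_rhoSub_mul G (Finset.subset_univ ({u, v} : Finset V))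
  rw [← rho_eq_rhoSub_univ, Finset.card_pair huv.ne] at h1
  have h2 : alphaSub G {u, v} ≤ 1 := by
    obtain ⟨A, hA, hs, hc⟩ := exists_card_eq_alphaSub G {u, v}
    rw [← hc, Finset.card_le_one]
    intro x hx y hy
    have hx' := hA hx
    have hy' := hA hy
    simp only [Finset.mem_insert, Finset.mem_singleton] at hx' hy'
    rcases hx' with rfl | rfl <;> rcases hy' with rfl | rfl
    · rfl
    · exact absurd huv (hs hx hy)
    · exact absurd huv (hs hy hx)
    · rfl
  have h3 : (alphaSub G {u, v} : ℝ) ≤ 1 := by exact_mod_cast h2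
  have h4 : 0 ≤ rho G := by rw [rho_eq_rhoSub_univ]; exact rhoSub_nonneg _ _
  have := mul_le_mul_of_nonneg_left h3 h4
  push_cast at h1
  linarith

/-- A set with Hall ratio above `1` is not stable. -/
lemma exists_adj_of_one_lt_rhoSub (G : SimpleGraph V) {S : Finset V} (h : 1 < rhoSub G S) :
    ∃ u ∈ S, ∃ v ∈ S, G.Adj u v := by
  by_contra! hno
  have : rhoSub G S ≤ 1 := by
    refine rhoSub_le G zero_le_one fun F hF => ?_
    rw [one_mul]
    exact_mod_cast card_le_alphaSub G (fun u hu v hv => hno u (hF hu) v (hF hv)) subset_rfl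
  linarith

end HallRatio

/-! ### Connected vertex subsets -/

section Connected

variable {V : Type}

/-- `Y` is a union of vertex sets of components of `G[X]`: no edge of `G[X]` leaves `Y`. -/
def ClosedIn (G : SimpleGraph V) (X Y : Finset V) : Prop :=
  Y ⊆ X ∧ ∀ y ∈ Y, ∀ z ∈ X, G.Adj y z → z ∈ Y

/-- `G[X]` is connected (or null): the only nonempty union of components of `G[X]` is `X`. -/
def Conn (G : SimpleGraph V) (X : Finset V) : Prop :=
  ∀ Y, ClosedIn G X Y → Y.Nonempty → Y = X

lemma ClosedIn.trans {G : SimpleGraph V} {X Y Z : Finset V} (h : ClosedIn G X Y)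
    (h' : ClosedIn G Y Z) : ClosedIn G X Z :=
  ⟨h'.1.trans h.1, fun y hy z hz hadj => h'.2 y hy z (h.2 y (h'.1 hy) z hz hadj) hadj⟩

lemma ClosedIn.sdiff [DecidableEq V] {G : SimpleGraph V} {X Y : Finset V} (h : ClosedIn G X Y) :
    ClosedIn G X (X \ Y) := by
  refine ⟨Finset.sdiff_subset, fun y hy z hz hadj => ?_⟩
  rw [Finset.mem_sdiff] at hy ⊢
  exact ⟨hz, fun hzY => hy.2 (h.2 z hzY y hy.1 hadj.symm)⟩

/-- The trace of a union of components on a smaller set. -/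
lemma ClosedIn.inter [DecidableEq V] {G : SimpleGraph V} {X Y Z : Finset V} (h : ClosedIn G X Y)
    (hZ : Z ⊆ X) : ClosedIn G Z (Z ∩ Y) := by
  refine ⟨Finset.inter_subset_left, fun y hy z hz hadj => ?_⟩
  rw [Finset.mem_inter] at hy ⊢
  exact ⟨hz, h.2 y hy.2 z (hZ hz) hadj⟩

lemma Conn.subset_of_closedIn [DecidableEq V] {G : SimpleGraph V} {X Y Z : Finset V}
    (hZ : Conn G Z) (hZX : Z ⊆ X) (h : ClosedIn G X Y) (hne : (Z ∩ Y).Nonempty) : Z ⊆ Y := by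
  have := hZ _ (h.inter hZX) hne
  exact Finset.inter_eq_left.1 this

/-- A connected subset of `X` lies in a component of `G[X]`. -/
lemma exists_component_superset [DecidableEq V] (G : SimpleGraph V) {X A : Finset V}
    (hA : Conn G A) (hAX : A ⊆ X) :
    ∃ K, A ⊆ K ∧ ClosedIn G X K ∧ Conn G K := by
  classical
  obtain ⟨K, hK, hmin⟩ := Finset.exists_min_image
    (X.powerset.filter fun K => A ⊆ K ∧ ClosedIn G X K) Finset.card
    ⟨X, by simp only [Finset.mem_filter, Finset.mem_powerset]
           exact ⟨subset_rfl, hAX, subset_rfl, fun _ _ z hz _ => hz⟩⟩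
  simp only [Finset.mem_filter, Finset.mem_powerset] at hK hmin
  refine ⟨K, hK.2.1, hK.2.2, fun Y hY hYne => ?_⟩
  by_cases hAY : (A ∩ Y).Nonempty
  · have hsub := hA.subset_of_closedIn hK.2.1 hY hAY
    have hcl := hK.2.2.trans hY
    exact Finset.eq_of_subset_of_card_le hY.1 (hmin Y ⟨hcl.1, hsub, hcl⟩)
  · exfalso
    have hcl := hK.2.2.trans hY.sdiff
    have hsub : A ⊆ K \ Y := by
      intro x hx
      rw [Finset.mem_sdiff]
      exact ⟨hK.2.1 hx, fun hxY => hAY ⟨x, Finset.mem_inter.2 ⟨hx, hxY⟩⟩⟩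
    have hle := hmin (K \ Y) ⟨hcl.1, hsub, hcl⟩
    have hlt : (K \ Y).card < K.card := by
      apply Finset.card_lt_card
      rw [Finset.ssubset_iff_subset_ne]
      refine ⟨Finset.sdiff_subset, fun heq => ?_⟩
      obtain ⟨y, hy⟩ := hYne
      have := hY.1 hy
      rw [← heq, Finset.mem_sdiff] at this
      exact this.2 hy
    omega

/-- Some component of `G[X]` has the Hall ratio of `X`. -/
lemma exists_component_rhoSub [Fintype V] (G : SimpleGraph V) (X : Finset V) (hX : X.Nonempty) :
    ∃ K, K.Nonempty ∧ ClosedIn G X K ∧ Conn G K ∧ rhoSub G X ≤ rhoSub G K := by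
  classical
  induction X using Finset.strongInduction with
  | H X ih =>
    by_cases hc : Conn G X
    · exact ⟨X, hX, ⟨subset_rfl, fun _ _ z hz _ => hz⟩, hc, le_rfl⟩
    · unfold Conn at hc
      push Not at hc
      obtain ⟨Y, hY, hYne, hYX⟩ := hc
      have hac : AnticompletePair G Y (X \ Y) := by
        refine ⟨Finset.disjoint_sdiff, fun a ha b hb hadj => ?_⟩
        rw [Finset.mem_sdiff] at hb
        exact hb.2 (hY.2 a ha b hb.1 hadj)
      have hmax := rhoSub_union_le_max G hac
      rw [Finset.union_sdiff_of_subset hY.1] at hmax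
      have hss : Y ⊂ X := Finset.ssubset_iff_subset_ne.2 ⟨hY.1, hYX⟩
      rcases le_max_iff.1 hmax with h | h
      · obtain ⟨K, h1, h2, h3, h4⟩ := ih Y hss hYne
        exact ⟨K, h1, hY.trans h2, h3, h.trans h4⟩
      · have hss' : X \ Y ⊂ X := by
          rw [Finset.ssubset_iff_subset_ne]
          refine ⟨Finset.sdiff_subset, fun heq => ?_⟩
          obtain ⟨y, hy⟩ := hYne
          have := hY.1 hy
          rw [← heq, Finset.mem_sdiff] at this
          exact this.2 hy
        obtain ⟨K, h1, h2, h3, h4⟩ := ih (X \ Y) hss' (Finset.sdiff_nonempty.2 hss.2)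
        exact ⟨K, h1, hY.sdiff.trans h2, h3, h.trans h4⟩

lemma Conn.insert [DecidableEq V] {G : SimpleGraph V} {X : Finset V} (hX : Conn G X) {u x : V}
    (hx : x ∈ X) (hadj : G.Adj u x) : Conn G (insert u X) := by
  intro Y hY hne
  have hXY : X ⊆ Y := by
    refine hX.subset_of_closedIn (Finset.subset_insert _ _) hY ?_
    obtain ⟨y, hy⟩ := hne
    rcases Finset.mem_insert.1 (hY.1 hy) with rfl | hyX
    · exact ⟨x, Finset.mem_inter.2 ⟨hx, hY.2 y hy x (Finset.mem_insert_of_mem hx) hadj⟩⟩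
    · exact ⟨y, Finset.mem_inter.2 ⟨hyX, hy⟩⟩
  refine subset_antisymm hY.1 (Finset.insert_subset ?_ hXY)
  exact hY.2 x (hXY hx) u (Finset.mem_insert_self _ _) hadj.symm

/-- A vertex with both a neighbour and a non-neighbour in a connected set distinguishes the
ends of some edge of that set. -/
lemma Conn.exists_mixed_edge {G : SimpleGraph V} {X : Finset V} (hX : Conn G X) {v x y : V}
    (hx : x ∈ X) (hvx : G.Adj v x) (hy : y ∈ X) (hvy : ¬ G.Adj v y) :
    ∃ c ∈ X, ∃ c' ∈ X, G.Adj c c' ∧ G.Adj v c ∧ ¬ G.Adj v c' := by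
  classical
  by_contra! hno
  have hcl : ClosedIn G X (X.filter fun z => G.Adj v z) := by
    refine ⟨Finset.filter_subset _ _, fun c hc c' hc' hadj => ?_⟩
    rw [Finset.mem_filter] at hc ⊢
    exact ⟨hc', hno c hc.1 c' hc' hadj hc.2⟩
  have := hX _ hcl ⟨x, Finset.mem_filter.2 ⟨hx, hvx⟩⟩
  rw [← this, Finset.mem_filter] at hy
  exact hvy hy.2

end Connected

/-! ### Consequences of excluding the five-vertex path -/

section PathFree

variable {V : Type} {G : SimpleGraph V}

lemma P5Free.not_path (hG : P5Free G) {a b c d e : V} (hab : G.Adj a b) (hbc : G.Adj b c)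
    (hcd : G.Adj c d) (hde : G.Adj d e) (hac : ¬ G.Adj a c) (had : ¬ G.Adj a d)
    (hae : ¬ G.Adj a e) (hbd : ¬ G.Adj b d) (hbe : ¬ G.Adj b e) (hce : ¬ G.Adj c e) : False := by
  have nac : a ≠ c := by rintro rfl; exact had hcd
  have nad : a ≠ d := by rintro rfl; exact hac hcd.symm
  have nae : a ≠ e := by rintro rfl; exact had hde.symm
  have nbd : b ≠ d := by rintro rfl; exact had hab
  have nbe : b ≠ e := by rintro rfl; exact hae hab
  have nce : c ≠ e := by rintro rfl; exact hbe hbc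
  have nab := hab.ne
  have nbc := hbc.ne
  have ncd := hcd.ne
  have nde := hde.ne
  refine hG.false ⟨⟨![a, b, c, d, e], ?_⟩, ?_⟩
  · intro i j hij
    fin_cases i <;> fin_cases j <;> simp_all
  · intro i j
    change G.Adj (![a, b, c, d, e] i) (![a, b, c, d, e] j) ↔ P5.Adj i j
    have s := fun x y => G.adj_comm x y
    fin_cases i <;> fin_cases j <;>
      simp [P5, SimpleGraph.fromRel_adj, hab, hbc, hcd, hde, hac, had, hae, hbd, hbe, hce,
        hab.symm, hbc.symm, hcd.symm, hde.symm, s c a, s d a, s e a, s d b, s e b, s e c]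

/-- A vertex with neighbours in two anticomplete connected sets is complete to one of them. -/
lemma P5Free.complete_or_complete (hG : P5Free G) {A B : Finset V} (hA : Conn G A)
    (hB : Conn G B) (hAB : AnticompletePair G A B) {v a b : V} (ha : a ∈ A) (hva : G.Adj v a)
    (hb : b ∈ B) (hvb : G.Adj v b) :
    (∀ x ∈ A, G.Adj v x) ∨ (∀ x ∈ B, G.Adj v x) := by
  by_contra! hno
  obtain ⟨⟨x, hx, hvx⟩, y, hy, hvy⟩ := hno
  obtain ⟨c, hc, c', hc', hcc, hvc, hvc'⟩ := hA.exists_mixed_edge ha hva hx hvx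
  obtain ⟨d, hd, d', hd', hdd, hvd, hvd'⟩ := hB.exists_mixed_edge hb hvb hy hvy
  exact hG.not_path hcc.symm hvc.symm hvd hdd (fun h => hvc' h.symm) (hAB.2 _ hc' _ hd)
    (hAB.2 _ hc' _ hd') (hAB.2 _ hc _ hd) (hAB.2 _ hc _ hd') hvd'

/-- If `v` has a neighbour `b` anticomplete to a connected set `X`, then every vertex of `X` is
within distance two of `v` in `G[X ∪ {v}]`. -/
lemma P5Free.dominates (hG : P5Free G) {X : Finset V} (hX : Conn G X) {v b x y : V}
    (hvb : G.Adj v b) (hbX : ∀ z ∈ X, ¬ G.Adj b z) (hx : x ∈ X) (hvx : G.Adj v x)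
    (hy : y ∈ X) (hvy : ¬ G.Adj v y) : ∃ z ∈ X, G.Adj v z ∧ G.Adj z y := by
  classical
  by_contra! hno
  have hcl : ClosedIn G X
      (X.filter fun w => G.Adj v w ∨ ∃ z ∈ X, G.Adj v z ∧ G.Adj z w) := by
    refine ⟨Finset.filter_subset _ _, fun c hc c' hc' hadj => ?_⟩
    rw [Finset.mem_filter] at hc ⊢
    refine ⟨hc', ?_⟩
    by_contra! hfar
    obtain ⟨hfar1, hfar2⟩ := hfar
    have hvc : ¬ G.Adj v c := fun h => hfar2 c hc.1 h hadj
    obtain ⟨z, hz, hvz, hzc⟩ := hc.2.resolve_left hvc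
    exact hG.not_path hvb.symm hvz hzc hadj (hbX z hz) (hbX c hc.1) (hbX c' hc') hvc hfar1
      (hfar2 z hz hvz)
  have := hX _ hcl ⟨x, Finset.mem_filter.2 ⟨hx, Or.inl hvx⟩⟩
  rw [← this, Finset.mem_filter] at hy
  rcases hy.2 with h | ⟨z, hz, h1, h2⟩
  · exact hvy h
  · exact hno z hz h1 h2

/-- Let `K`, `K'` be subsets anticomplete to a connected set `C` and to each other. Two vertices
with neighbours in `C`, one with a neighbour in `K` only and the other with a neighbour in `K'`
only, are adjacent. -/
lemma P5Free.adj_of_private (hG : P5Free G) {C : Finset V} (hC : Conn G C) {u v b b' c c' : V}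
    (hbC : ∀ z ∈ C, ¬ G.Adj b z) (hbC' : ∀ z ∈ C, ¬ G.Adj b' z) (hbb : ¬ G.Adj b b')
    (hvb : G.Adj v b) (hub : G.Adj u b') (hvb' : ¬ G.Adj v b') (hub' : ¬ G.Adj u b)
    (hc : c ∈ C) (hvc : G.Adj v c) (hc' : c' ∈ C) (huc : G.Adj u c') : G.Adj v u := by
  classical
  by_contra hvu
  have hX : Conn G (insert b' (insert u C)) :=
    (hC.insert hc' huc).insert (Finset.mem_insert_self _ _) hub.symm
  obtain ⟨z, hz, hvz, hzb⟩ := hG.dominates hX (v := v) (b := b) (x := c) (y := b') hvb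
    (by
      intro z hz
      simp only [Finset.mem_insert] at hz
      rcases hz with rfl | rfl | hz
      · exact hbb
      · exact fun h => hub' h.symm
      · exact hbC z hz)
    (by simp [hc]) hvc (by simp) hvb'
  simp only [Finset.mem_insert] at hz
  rcases hz with rfl | rfl | hz
  · exact hzb.ne rfl
  · exact hvu hvz
  · exact hbC' z hz hzb.symm

end PathFree

/-! ### Private parts in a cover by small sets -/

/-- If small sets `N i` cover `Ω`, then for some subfamily of size `k ≥ D` every member contains
at least `U / k ^ 8` points of `Ω` lying in no other member. The subfamily `I` maximises
`|⋃ N i| - β |I| / (|I| + 1)`, with `β = 2 U / D ^ 6`: as dropping a member does not increase this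
quantity, its private part has size at least `β / (k (k + 1))`. -/
lemma exists_private {V ι : Type*} [DecidableEq V] [DecidableEq ι] (J : Finset ι)
    (N : ι → Finset V) (Ω : Finset V) (D U : ℝ) (hD : 1 ≤ D) (hU : 0 < U)
    (hcov : ∀ v ∈ Ω, ∃ i ∈ J, v ∈ N i) (hN : ∀ i ∈ J, ((Ω ∩ N i).card : ℝ) ≤ U / D ^ 8)
    (hΩ : 2 * U / D ^ 6 < Ω.card) :
    ∃ I ⊆ J, D ≤ I.card ∧ ∀ i ∈ I,
      U / (I.card : ℝ) ^ 8 ≤ ((Ω.filter fun v => v ∈ N i ∧ ∀ j ∈ I, j ≠ i → v ∉ N j).card : ℝ) := by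
  have hD0 : 0 < D := by linarith
  set β : ℝ := 2 * U / D ^ 6 with hβ
  have hβ0 : 0 < β := by positivity
  let cov : Finset ι → Finset V := fun I => Ω.filter fun v => ∃ i ∈ I, v ∈ N i
  let Φ : Finset ι → ℝ := fun I => ((cov I).card : ℝ) - β * (I.card / (I.card + 1))
  obtain ⟨I, hI, hmax⟩ := Finset.exists_max_image J.powerset Φ ⟨J, by simp⟩
  rw [Finset.mem_powerset] at hI
  have hpos : 0 < Φ I := by
    refine lt_of_lt_of_le ?_ (hmax J (by simp))
    have h1 : cov J = Ω := Finset.filter_true_of_mem hcov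
    have h2 : (J.card : ℝ) / (J.card + 1) ≤ 1 := by
      rw [div_le_one (by positivity)]; linarith
    have h3 := mul_le_mul_of_nonneg_left h2 hβ0.le
    simp only [Φ, h1]
    linarith
  have hle : ((cov I).card : ℝ) ≤ I.card * (U / D ^ 8) := by
    have hsub : cov I ⊆ I.biUnion fun i => Ω ∩ N i := by
      intro v hv
      obtain ⟨hv, i, hi, hvi⟩ := Finset.mem_filter.1 hv
      exact Finset.mem_biUnion.2 ⟨i, hi, Finset.mem_inter.2 ⟨hv, hvi⟩⟩
    calc ((cov I).card : ℝ) ≤ ((I.biUnion fun i => Ω ∩ N i).card : ℝ) := by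
          exact_mod_cast Finset.card_le_card hsub
      _ ≤ ∑ i ∈ I, ((Ω ∩ N i).card : ℝ) := by exact_mod_cast Finset.card_biUnion_le
      _ ≤ ∑ i ∈ I, U / D ^ 8 := Finset.sum_le_sum fun i hi => hN i (hI hi)
      _ = I.card * (U / D ^ 8) := by rw [Finset.sum_const, nsmul_eq_mul]
  have hkpos : (0 : ℝ) < I.card := by
    rcases Nat.eq_zero_or_pos I.card with h0 | h0
    · exfalso
      simp only [Φ, h0] at hpos hle
      simp at hpos hle
      simp [hle] at hpos
    · exact_mod_cast h0
  have hk1 : (1 : ℝ) ≤ I.card := by exact_mod_cast (by exact_mod_cast hkpos : 0 < I.card)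
  have hDk : D ≤ I.card := by
    by_contra! hlt
    have h1 : β * (I.card / (I.card + 1)) < I.card * (U / D ^ 8) := by
      have : 0 < ((cov I).card : ℝ) - β * (I.card / (I.card + 1)) := hpos
      linarith
    have h2 : β * (I.card / (I.card + 1)) =
        (I.card * (U / D ^ 8)) * (2 * D ^ 2 / (I.card + 1)) := by
      rw [hβ]; field_simp
    have h3 : 1 ≤ 2 * D ^ 2 / ((I.card : ℝ) + 1) := by
      rw [le_div_iff₀ (by positivity)]; nlinarith
    have h4 : 0 < (I.card : ℝ) * (U / D ^ 8) := by positivity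
    nlinarith
  refine ⟨I, hI, hDk, fun i hi => ?_⟩
  set W := Ω.filter fun v => v ∈ N i ∧ ∀ j ∈ I, j ≠ i → v ∉ N j with hW
  have herase := hmax (I.erase i) (Finset.mem_powerset.2 ((Finset.erase_subset _ _).trans hI))
  have hcard : ((I.erase i).card : ℝ) = I.card - 1 := by
    rw [Finset.card_erase_of_mem hi, Nat.cast_sub (by exact_mod_cast hk1)]; simp
  have hcovle : ((cov I).card : ℝ) ≤ (cov (I.erase i)).card + W.card := by
    have hsub : cov I ⊆ cov (I.erase i) ∪ W := by
      intro v hv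
      obtain ⟨hv, j, hj, hvj⟩ := Finset.mem_filter.1 hv
      by_cases h : ∃ l ∈ I.erase i, v ∈ N l
      · exact Finset.mem_union_left _ (Finset.mem_filter.2 ⟨hv, h⟩)
      · push Not at h
        refine Finset.mem_union_right _ (Finset.mem_filter.2 ⟨hv, ?_, fun l hl hli =>
          h l (Finset.mem_erase.2 ⟨hli, hl⟩)⟩)
        by_cases hji : j = i
        · exact hji ▸ hvj
        · exact absurd hvj (h j (Finset.mem_erase.2 ⟨hji, hj⟩))
    exact_mod_cast (Finset.card_le_card hsub).trans (Finset.card_union_le _ _)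
  simp only [Φ, hcard] at herase
  have hdiff : β * ((I.card : ℝ) / (I.card + 1)) - β * ((I.card - 1) / (I.card - 1 + 1))
      = β / (I.card * (I.card + 1)) := by
    rw [sub_add_cancel]; field_simp; ring
  have hgoal : U / (I.card : ℝ) ^ 8 ≤ β / (I.card * (I.card + 1)) := by
    rw [hβ, div_div, div_le_div_iff₀ (by positivity) (by positivity)]
    have h6 : D ^ 6 ≤ (I.card : ℝ) ^ 6 := by gcongr
    have h7 : D ^ 6 * ((I.card : ℝ) * (I.card + 1)) ≤ (I.card : ℝ) ^ 6 * (I.card * (2 * I.card)) := by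
      gcongr; linarith
    nlinarith
  linarith

/-! ### Separators, mixed vertices and minimal good sets -/

section Core

variable {V : Type}

lemma AnticompletePair.symm {G : SimpleGraph V} {A B : Finset V} (h : AnticompletePair G A B) :
    AnticompletePair G B A :=
  ⟨h.1.symm, fun a ha b hb hadj => h.2 b hb a ha hadj.symm⟩

lemma AnticompletePair.mono {G : SimpleGraph V} {A B A' B' : Finset V}
    (h : AnticompletePair G A B) (hA : A' ⊆ A) (hB : B' ⊆ B) : AnticompletePair G A' B' :=
  ⟨h.1.mono hA hB, fun a ha b hb => h.2 a (hA ha) b (hB hb)⟩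

lemma completePair_of_adj {G : SimpleGraph V} {A B : Finset V}
    (h : ∀ a ∈ A, ∀ b ∈ B, G.Adj a b) : CompletePair G A B :=
  ⟨Finset.disjoint_left.2 fun x hx hx' => G.irrefl (h x hx x hx'), h⟩

/-- Two components of `G[X]` are equal or anticomplete. -/
lemma eq_or_anticomplete {G : SimpleGraph V} {X K K' : Finset V} (hK : ClosedIn G X K)
    (hK' : ClosedIn G X K') (hc : Conn G K) (hc' : Conn G K') :
    K = K' ∨ AnticompletePair G K K' := by
  classical
  by_cases h : (K ∩ K').Nonempty
  · left
    exact subset_antisymm (hc.subset_of_closedIn hK.1 hK' h)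
      (hc'.subset_of_closedIn hK'.1 hK (by rwa [Finset.inter_comm]))
  · right
    have hd : Disjoint K K' := by
      rwa [Finset.disjoint_iff_inter_eq_empty, ← Finset.not_nonempty_iff_eq_empty]
    exact ⟨hd, fun a ha b hb hadj =>
      Finset.disjoint_left.1 hd (hK.2 a ha b (hK'.1 hb) hadj) hb⟩

/-- A separator of `G[C]` every vertex of which is complete to one of the two separated
components. With `A'` the component containing `A` of `G[C]` minus `B` and the neighbours of `B`,
the separator consists of the vertices of `C` outside `A'` with a neighbour in `A'`; all of them
have a neighbour in `B` as well. -/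
lemma P5Free.exists_separator {G : SimpleGraph V} (hG : P5Free G) {C A B : Finset V}
    (hA : Conn G A) (hB : Conn G B) (hBne : B.Nonempty) (hAC : A ⊆ C) (hBC : B ⊆ C)
    (hAB : AnticompletePair G A B) :
    ∃ S A' B' : Finset V, A ⊆ A' ∧ B ⊆ B' ∧ (∀ x ∈ A', x ∈ C ∧ x ∉ S) ∧
      (∀ x ∈ B', x ∈ C ∧ x ∉ S) ∧
      (∀ y ∈ A', ∀ z ∈ C, z ∉ S → G.Adj y z → z ∈ A') ∧
      (∀ y ∈ B', ∀ z ∈ C, z ∉ S → G.Adj y z → z ∈ B') ∧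
      Conn G A' ∧ Conn G B' ∧ AnticompletePair G A' B' ∧
      ∀ v ∈ S, (∀ x ∈ A', G.Adj v x) ∨ (∀ x ∈ B', G.Adj v x) := by
  classical
  let T := C.filter fun v => v ∈ B ∨ ∃ b ∈ B, G.Adj v b
  have hAT : A ⊆ C \ T := by
    intro x hx
    simp only [T, Finset.mem_sdiff, Finset.mem_filter, not_and, not_or, not_exists]
    exact ⟨hAC hx, fun _ => ⟨Finset.disjoint_left.1 hAB.1 hx, fun b hb => hAB.2 x hx b hb⟩⟩
  obtain ⟨A', hAA', hA'cl, hA'⟩ := exists_component_superset G hA hAT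
  let S := C.filter fun v => v ∉ A' ∧ ∃ x ∈ A', G.Adj v x
  have hA'C : ∀ x ∈ A', x ∈ C ∧ x ∉ B ∧ ∀ b ∈ B, ¬ G.Adj x b := by
    intro x hx
    have := hA'cl.1 hx
    simp only [T, Finset.mem_sdiff, Finset.mem_filter, not_and, not_or, not_exists] at this
    exact ⟨this.1, (this.2 this.1).1, (this.2 this.1).2⟩
  have hcl : ClosedIn G (C \ S) A' := by
    refine ⟨fun x hx => ?_, fun y hy z hz hadj => ?_⟩
    · simp only [S, Finset.mem_sdiff, Finset.mem_filter, not_and]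
      exact ⟨(hA'C x hx).1, fun _ h => absurd hx h⟩
    · by_contra hzA
      rw [Finset.mem_sdiff] at hz
      exact hz.2 (Finset.mem_filter.2 ⟨hz.1, hzA, y, hy, hadj.symm⟩)
  have hBS : B ⊆ C \ S := by
    intro b hb
    simp only [S, Finset.mem_sdiff, Finset.mem_filter, not_and, not_exists]
    exact ⟨hBC hb, fun _ _ x hx hadj => (hA'C x hx).2.2 b hb hadj.symm⟩
  obtain ⟨B', hBB', hB'cl, hB'⟩ := exists_component_superset G hB hBS
  have hne : A' ≠ B' := by
    rintro rfl
    obtain ⟨b, hb⟩ := hBne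
    exact (hA'C b (hBB' hb)).2.1 hb
  have hac := (eq_or_anticomplete hcl hB'cl hA' hB').resolve_left hne
  refine ⟨S, A', B', hAA', hBB', fun x hx => Finset.mem_sdiff.1 (hcl.1 hx),
    fun x hx => Finset.mem_sdiff.1 (hB'cl.1 hx),
    fun y hy z hz hzS hadj => hcl.2 y hy z (Finset.mem_sdiff.2 ⟨hz, hzS⟩) hadj,
    fun y hy z hz hzS hadj => hB'cl.2 y hy z (Finset.mem_sdiff.2 ⟨hz, hzS⟩) hadj,
    hA', hB', hac, fun v hv => ?_⟩
  obtain ⟨hvC, hvA, x, hx, hvx⟩ := Finset.mem_filter.1 hv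
  have hvT : v ∈ T := by
    by_contra hvT
    exact hvA (hA'cl.2 x hx v (Finset.mem_sdiff.2 ⟨hvC, hvT⟩) hvx.symm)
  rcases (Finset.mem_filter.1 hvT).2 with hvB | ⟨b, hb, hvb⟩
  · exact absurd hv (Finset.mem_sdiff.1 (hBS hvB)).2
  · exact hG.complete_or_complete hA' hB' hac hx hvx (hBB' hb) hvb

variable [Fintype V]

open Classical in
/-- The vertices outside `C` with no neighbour in `C`. -/
noncomputable def far (G : SimpleGraph V) (C : Finset V) : Finset V :=
  Finset.univ.filter fun v => v ∉ C ∧ ∀ c ∈ C, ¬ G.Adj v c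

lemma mem_far {G : SimpleGraph V} {C : Finset V} {v : V} :
    v ∈ far G C ↔ v ∉ C ∧ ∀ c ∈ C, ¬ G.Adj v c := by
  simp [far]

lemma far_anti {G : SimpleGraph V} {C C' : Finset V} (h : C' ⊆ C) : far G C ⊆ far G C' := by
  intro v hv
  rw [mem_far] at hv ⊢
  exact ⟨fun hv' => hv.1 (h hv'), fun c hc => hv.2 c (h hc)⟩

/-- Let `Q` be a set of vertices mixed on the connected set `C`, each of them complete to some
connected set of Hall ratio at least `τ` in `far G C`. The sets `N K` of vertices complete to a
component `K` of `far G C` with `ρ(K) ≥ τ` cover `Q`, and each has small Hall ratio. If `ρ(Q)` is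
not small, then enough of them have large private parts, and those private parts form a complete
blockade. -/
lemma P5Free.rhoSub_mixed_le {G : SimpleGraph V} (hG : P5Free G) {C Q : Finset V} (hC : Conn G C)
    {R δ τ : ℝ} (hR : 0 < R) (hδ : 0 < δ) (hδ2 : δ ≤ 1 / 2)
    (hQ : ∀ v ∈ Q, (∃ c ∈ C, G.Adj v c) ∧ ¬ (∀ c ∈ C, G.Adj v c) ∧
      ∃ B ⊆ far G C, B.Nonempty ∧ Conn G B ∧ τ ≤ rhoSub G B ∧ ∀ b ∈ B, G.Adj v b)
    (hpair : ∀ X Y, CompletePair G X Y → τ ≤ rhoSub G Y → rhoSub G X < δ ^ 8 * R)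
    (hblk : ¬ ∃ (k : ℕ) (B : Fin k → Finset V), 2 ≤ k ∧ CompleteBlockade G B ∧
      ∀ i, ((k : ℝ) ^ 8)⁻¹ * R ≤ rhoSub G (B i)) :
    rhoSub G Q ≤ 2 * δ ^ 6 * R := by
  classical
  by_contra! hlarge
  obtain ⟨F, hFQ, hF⟩ := exists_psiSub_eq_rhoSub G Q
  rw [psiSub_eq] at hF
  have hpos : 0 < (F.card : ℝ) / alphaSub G F := by
    rw [hF]; exact lt_trans (by positivity) hlarge
  have hFne : F.Nonempty := by
    rw [Finset.nonempty_iff_ne_empty]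
    rintro rfl
    simp at hpos
  have hα : (0 : ℝ) < alphaSub G F := by exact_mod_cast alphaSub_pos G hFne
  rw [div_eq_iff hα.ne'] at hF
  let J : Finset (Finset V) := Finset.univ.filter fun K =>
    ClosedIn G (far G C) K ∧ Conn G K ∧ K.Nonempty ∧ τ ≤ rhoSub G K
  let N : Finset V → Finset V := fun K => Finset.univ.filter fun v => ∀ x ∈ K, G.Adj v x
  obtain ⟨I, hIJ, hDI, hI⟩ := exists_private J N F δ⁻¹ (R * alphaSub G F)
    ((one_le_inv₀ hδ).2 (by linarith)) (by positivity)
    (by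
      intro v hv
      obtain ⟨⟨c, hc, hvc⟩, hnot, B, hBfar, ⟨b, hb⟩, hBc, hBτ, hvB⟩ := hQ v (hFQ hv)
      obtain ⟨K, hBK, hKcl, hKc⟩ := exists_component_superset G hBc hBfar
      refine ⟨K, ?_, ?_⟩
      · simp only [J, Finset.mem_filter, Finset.mem_univ, true_and]
        exact ⟨hKcl, hKc, ⟨b, hBK hb⟩, hBτ.trans (rhoSub_mono G hBK)⟩
      · simp only [N, Finset.mem_filter, Finset.mem_univ, true_and]
        have hac : AnticompletePair G C K := by
          refine ⟨Finset.disjoint_left.2 fun x hx hxK => (mem_far.1 (hKcl.1 hxK)).1 hx, ?_⟩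
          exact fun x hx y hy hadj => (mem_far.1 (hKcl.1 hy)).2 x hx hadj.symm
        exact (hG.complete_or_complete hC hKc hac hc hvc (hBK hb) (hvB b hb)).resolve_left hnot)
    (by
      intro K hK
      simp only [J, Finset.mem_filter, Finset.mem_univ, true_and] at hK
      have h1 : rhoSub G (F ∩ N K) < δ ^ 8 * R :=
        hpair _ K (completePair_of_adj fun v hv x hx =>
          (Finset.mem_filter.1 (Finset.mem_inter.1 hv).2).2 x hx) hK.2.2.2
      have h2 := card_le_rhoSub_mul G (subset_refl (F ∩ N K))
      have h3 : (alphaSub G (F ∩ N K) : ℝ) ≤ alphaSub G F := by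
        exact_mod_cast alphaSub_mono G Finset.inter_subset_left
      calc ((F ∩ N K).card : ℝ) ≤ rhoSub G (F ∩ N K) * alphaSub G (F ∩ N K) := h2
        _ ≤ (δ ^ 8 * R) * alphaSub G F := by gcongr
        _ = R * alphaSub G F / δ⁻¹ ^ 8 := by rw [inv_pow, div_inv_eq_mul]; ring)
    (by
      rw [inv_pow, div_inv_eq_mul, hF]
      nlinarith)
  have hI2 : (2 : ℝ) ≤ I.card := by
    refine le_trans ?_ hDI
    rw [le_inv_comm₀ (by norm_num) hδ]
    linarith
  let W : Finset V → Finset V := fun K =>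
    F.filter fun v => v ∈ N K ∧ ∀ K' ∈ I, K' ≠ K → v ∉ N K'
  have hadj : ∀ K ∈ I, ∀ K' ∈ I, K ≠ K' → ∀ v ∈ W K, ∀ u ∈ W K', G.Adj v u := by
    intro K hK K' hK' hne v hv u hu
    have hKJ := hIJ hK
    have hKJ' := hIJ hK'
    simp only [J, Finset.mem_filter, Finset.mem_univ, true_and] at hKJ hKJ'
    obtain ⟨hvF, hvK, hvp⟩ := Finset.mem_filter.1 hv
    obtain ⟨huF, huK, hup⟩ := Finset.mem_filter.1 hu
    have hvK' := hvp K' hK' hne.symm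
    have huK' := hup K hK hne
    simp only [N, Finset.mem_filter, Finset.mem_univ, true_and] at hvK huK hvK' huK'
    have hac := (eq_or_anticomplete hKJ.1 hKJ'.1 hKJ.2.1 hKJ'.2.1).resolve_left hne
    obtain ⟨⟨c, hc, hvc⟩, hvC, -⟩ := hQ v (hFQ hvF)
    obtain ⟨⟨c', hc', huc⟩, huC, -⟩ := hQ u (hFQ huF)
    have hCK : ∀ L, ClosedIn G (far G C) L → AnticompletePair G C L := fun L hL =>
      ⟨Finset.disjoint_left.2 fun x hx hxK => (mem_far.1 (hL.1 hxK)).1 hx,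
        fun x hx y hy hadj => (mem_far.1 (hL.1 hy)).2 x hx hadj.symm⟩
    obtain ⟨b, hb⟩ := hKJ.2.2.1
    obtain ⟨b', hb'⟩ := hKJ'.2.2.1
    -- `v` is complete neither to `C` nor to `K'`, but it sees `C`; so it misses `K'` altogether.
    have hvb' : ¬ G.Adj v b' := fun h =>
      (hG.complete_or_complete hC hKJ'.2.1 (hCK _ hKJ'.1) hc hvc hb' h).elim hvC hvK'
    have hub : ¬ G.Adj u b := fun h =>
      (hG.complete_or_complete hC hKJ.2.1 (hCK _ hKJ.1) hc' huc hb h).elim huC huK'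
    exact hG.adj_of_private hC (mem_far.1 (hKJ.1.1 hb)).2 (mem_far.1 (hKJ'.1.1 hb')).2
      (hac.2 b hb b' hb') (hvK b hb) (huK b' hb') hvb' hub hc hvc hc' huc
  apply hblk
  have hinj : ∀ i j : Fin I.card, i ≠ j →
      ((I.equivFin.symm i : Finset V)) ≠ (I.equivFin.symm j : Finset V) := fun i j hij h =>
    hij (I.equivFin.symm.injective (Subtype.ext h))
  have hcp : ∀ i j : Fin I.card, i ≠ j →
      CompletePair G (W (I.equivFin.symm i)) (W (I.equivFin.symm j)) := fun i j hij =>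
    completePair_of_adj (hadj _ (I.equivFin.symm i).2 _ (I.equivFin.symm j).2 (hinj i j hij))
  refine ⟨I.card, fun i => W (I.equivFin.symm i), by exact_mod_cast hI2,
    ⟨fun i j hij => (hcp i j hij).1, fun i j hij => (hcp i j hij).2⟩, fun i => ?_⟩
  have h1 : R * alphaSub G F / (I.card : ℝ) ^ 8 ≤ ((W (I.equivFin.symm i)).card : ℝ) := by
    convert hI _ (I.equivFin.symm i).2
  have h2 := card_le_rhoSub_mul G (subset_refl (W (I.equivFin.symm i)))
  have h3 : (alphaSub G (W (I.equivFin.symm i)) : ℝ) ≤ alphaSub G F := by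
    exact_mod_cast alphaSub_mono G (Finset.filter_subset _ _)
  have h4 : R * alphaSub G F / (I.card : ℝ) ^ 8 ≤
      rhoSub G (W (I.equivFin.symm i)) * alphaSub G F :=
    h1.trans (h2.trans (mul_le_mul_of_nonneg_left h3 (rhoSub_nonneg _ _)))
  refine le_of_mul_le_mul_right ?_ hα
  calc ((I.card : ℝ) ^ 8)⁻¹ * R * alphaSub G F = R * alphaSub G F / (I.card : ℝ) ^ 8 := by
        rw [div_eq_inv_mul]; ring
    _ ≤ _ := h4

/-- `C` is a nonempty connected set with `ρ(C) ≥ q`, and each vertex with a neighbour in `C` is complete to `C`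
or to some connected set of Hall ratio at least `τ` far from `C`. -/
def Good (G : SimpleGraph V) (τ q : ℝ) (C : Finset V) : Prop :=
  C.Nonempty ∧ Conn G C ∧ q ≤ rhoSub G C ∧ ∀ v, v ∉ C → (∃ c ∈ C, G.Adj v c) →
    (∀ c ∈ C, G.Adj v c) ∨
      ∃ B ⊆ far G C, B.Nonempty ∧ Conn G B ∧ τ ≤ rhoSub G B ∧ ∀ b ∈ B, G.Adj v b

/-- The induction step, as a contradiction: if every set of Hall ratio at least `(1 - δ ^ 2) * R`,
where `R = ρ(G)`, contains an anticomplete pair with Hall ratios at least `(1 - 5 / 2 * δ) * R`,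
and `G` has neither a suitable complete pair nor a suitable blockade, then `G` has an anticomplete
pair with Hall ratios at least `(1 - 2 * δ ^ 2) * R`. A good set `C` of minimum size is
split by a separator `S`; both `S` and the set of vertices outside `C` with a neighbour in `C` have
small Hall ratio, and the component of maximum Hall ratio of what remains either lies in `far G C`
or is a proper subset of `C` that is again good. -/
lemma P5Free.false_of_sparse {G : SimpleGraph V} (hG : P5Free G) {R δ τ : ℝ} (hR : 0 < R)
    (hRG : rho G = R) (hδ : 0 < δ) (hδ4 : δ ≤ 1 / 4) (hτ : τ = (1 - 5 / 2 * δ) * R)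
    (hsparse : ∀ F : Finset V, (1 - δ ^ 2) * R ≤ rhoSub G F →
      ∃ A B, A ⊆ F ∧ B ⊆ F ∧ AnticompletePair G A B ∧ τ ≤ rhoSub G A ∧ τ ≤ rhoSub G B)
    (hpair : ∀ X Y, CompletePair G X Y → τ ≤ rhoSub G Y → rhoSub G X < δ ^ 8 * R)
    (hblk : ¬ ∃ (k : ℕ) (B : Fin k → Finset V), 2 ≤ k ∧ CompleteBlockade G B ∧
      ∀ i, ((k : ℝ) ^ 8)⁻¹ * R ≤ rhoSub G (B i))
    (hanti : ¬ ∃ A B : Finset V, AnticompletePair G A B ∧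
      (1 - 2 * δ ^ 2) * R ≤ rhoSub G A ∧ (1 - 2 * δ ^ 2) * R ≤ rhoSub G B) : False := by
  classical
  have hδsq : δ ^ 2 ≤ 1 / 16 := by nlinarith
  have hτ0 : 0 < τ := by rw [hτ]; exact mul_pos (by linarith) hR
  have hτq : τ ≤ (1 - δ ^ 2) * R := by
    rw [hτ]; exact mul_le_mul_of_nonneg_right (by nlinarith) hR.le
  have huniv : (Finset.univ : Finset V).Nonempty :=
    nonempty_of_rhoSub_pos G (by rw [← rho_eq_rhoSub_univ, hRG]; exact hR)
  obtain ⟨C₀, hC₀ne, hC₀cl, hC₀c, hC₀ρ⟩ := exists_component_rhoSub G Finset.univ huniv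
  rw [← rho_eq_rhoSub_univ, hRG] at hC₀ρ
  have hgood₀ : Good G τ ((1 - δ ^ 2) * R) C₀ := by
    refine ⟨hC₀ne, hC₀c, le_trans ?_ hC₀ρ, fun v hv ⟨c, hc, hvc⟩ => ?_⟩
    · nlinarith [sq_nonneg δ]
    · exact absurd (hC₀cl.2 c hc v (Finset.mem_univ v) hvc.symm) hv
  obtain ⟨C, hCmem, hmin⟩ := Finset.exists_min_image
    (Finset.univ.filter (Good G τ ((1 - δ ^ 2) * R))) Finset.card
    ⟨C₀, Finset.mem_filter.2 ⟨Finset.mem_univ _, hgood₀⟩⟩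
  obtain ⟨hCne, hCc, hCρ, hCN⟩ := (Finset.mem_filter.1 hCmem).2
  -- The neighbours of `C` have small Hall ratio.
  let P : Finset V := Finset.univ.filter fun v => ∀ c ∈ C, G.Adj v c
  let Q : Finset V := Finset.univ.filter fun v =>
    v ∉ C ∧ (∃ c ∈ C, G.Adj v c) ∧ ¬ ∀ c ∈ C, G.Adj v c
  have hP : rhoSub G P < δ ^ 8 * R :=
    hpair P C (completePair_of_adj fun v hv => (Finset.mem_filter.1 hv).2) (hτq.trans hCρ)
  have hQ : rhoSub G Q ≤ 2 * δ ^ 6 * R := by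
    refine hG.rhoSub_mixed_le hCc hR hδ (by linarith) (fun v hv => ?_) hpair hblk
    obtain ⟨hvC, hv1, hv2⟩ := (Finset.mem_filter.1 hv).2
    exact ⟨hv1, hv2, (hCN v hvC hv1).resolve_left hv2⟩
  -- A separator of `C` of small Hall ratio.
  obtain ⟨A₀, B₀, hA₀C, hB₀C, hAB₀, hA₀ρ, hB₀ρ⟩ := hsparse C hCρ
  obtain ⟨A, hAne, hAcl, hAc, hAρ⟩ := exists_component_rhoSub G A₀
    (nonempty_of_rhoSub_pos G (hτ0.trans_le hA₀ρ))
  obtain ⟨B, hBne, hBcl, hBc, hBρ⟩ := exists_component_rhoSub G B₀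
    (nonempty_of_rhoSub_pos G (hτ0.trans_le hB₀ρ))
  obtain ⟨S, A', B', hAA', hBB', hA'S, hB'S, hA'cl, hB'cl, hA'c, hB'c, hAB', hS⟩ :=
    hG.exists_separator hAc hBc hBne (hAcl.1.trans hA₀C) (hBcl.1.trans hB₀C)
      (hAB₀.mono hAcl.1 hBcl.1)
  have hA'ρ : τ ≤ rhoSub G A' := (hA₀ρ.trans hAρ).trans (rhoSub_mono G hAA')
  have hB'ρ : τ ≤ rhoSub G B' := (hB₀ρ.trans hBρ).trans (rhoSub_mono G hBB')
  have hA'cl' : ClosedIn G (C \ S) A' := ⟨fun x hx => Finset.mem_sdiff.2 (hA'S x hx),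
    fun y hy z hz => hA'cl y hy z (Finset.mem_sdiff.1 hz).1 (Finset.mem_sdiff.1 hz).2⟩
  have hB'cl' : ClosedIn G (C \ S) B' := ⟨fun x hx => Finset.mem_sdiff.2 (hB'S x hx),
    fun y hy z hz => hB'cl y hy z (Finset.mem_sdiff.1 hz).1 (Finset.mem_sdiff.1 hz).2⟩
  let SA : Finset V := Finset.univ.filter fun v => ∀ x ∈ A', G.Adj v x
  let SB : Finset V := Finset.univ.filter fun v => ∀ x ∈ B', G.Adj v x
  have hSA : rhoSub G SA < δ ^ 8 * R :=
    hpair SA A' (completePair_of_adj fun v hv => (Finset.mem_filter.1 hv).2) hA'ρ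
  have hSB : rhoSub G SB < δ ^ 8 * R :=
    hpair SB B' (completePair_of_adj fun v hv => (Finset.mem_filter.1 hv).2) hB'ρ
  -- What remains still has almost full Hall ratio.
  let W : Finset V := (C \ S) ∪ far G C
  have hcover : (Finset.univ : Finset V) ⊆ (((W ∪ P) ∪ Q) ∪ SA) ∪ SB := by
    intro v _
    simp only [Finset.mem_union]
    by_cases hvC : v ∈ C
    · by_cases hvS : v ∈ S
      · rcases hS v hvS with h | h
        · exact Or.inl (Or.inr (Finset.mem_filter.2 ⟨Finset.mem_univ _, h⟩))
        · exact Or.inr (Finset.mem_filter.2 ⟨Finset.mem_univ _, h⟩)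
      · exact Or.inl (Or.inl (Or.inl (Or.inl (Finset.mem_union_left _
          (Finset.mem_sdiff.2 ⟨hvC, hvS⟩)))))
    · by_cases hvN : ∃ c ∈ C, G.Adj v c
      · by_cases hvP : ∀ c ∈ C, G.Adj v c
        · exact Or.inl (Or.inl (Or.inl (Or.inr (Finset.mem_filter.2 ⟨Finset.mem_univ _, hvP⟩))))
        · exact Or.inl (Or.inl (Or.inr (Finset.mem_filter.2
            ⟨Finset.mem_univ _, hvC, hvN, hvP⟩)))
      · push Not at hvN
        exact Or.inl (Or.inl (Or.inl (Or.inl (Finset.mem_union_right _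
          (mem_far.2 ⟨hvC, hvN⟩)))))
  have hWρ : (1 - δ ^ 2) * R ≤ rhoSub G W := by
    have h0 := rhoSub_mono G hcover
    rw [← rho_eq_rhoSub_univ, hRG] at h0
    have h1 := rhoSub_union_le G (((W ∪ P) ∪ Q) ∪ SA) SB
    have h2 := rhoSub_union_le G ((W ∪ P) ∪ Q) SA
    have h3 := rhoSub_union_le G (W ∪ P) Q
    have h4 := rhoSub_union_le G W P
    have h5 : 2 * δ ^ 6 + 3 * δ ^ 8 ≤ δ ^ 2 := by
      have e1 : δ ^ 4 ≤ 1 / 16 := by nlinarith [sq_nonneg δ]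
      have e2 : δ ^ 6 ≤ 1 / 16 := by nlinarith [sq_nonneg δ, pow_nonneg hδ.le 4]
      nlinarith [sq_nonneg δ]
    have h6 := mul_le_mul_of_nonneg_right h5 hR.le
    linarith
  have hWcl : ClosedIn G W (C \ S) := by
    refine ⟨Finset.subset_union_left, fun y hy z hz hadj => ?_⟩
    refine (Finset.mem_union.1 hz).resolve_right fun hzf => ?_
    exact (mem_far.1 hzf).2 y (Finset.mem_sdiff.1 hy).1 hadj.symm
  have hq0 : 0 < (1 - δ ^ 2) * R := mul_pos (by linarith) hR
  obtain ⟨E, hEne, hEcl, hEc, hEρ⟩ := exists_component_rhoSub G W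
    (nonempty_of_rhoSub_pos G (hq0.trans_le hWρ))
  have hEρ' := hWρ.trans hEρ
  by_cases hECS : (E ∩ (C \ S)).Nonempty
  swap
  · -- `E` is far from `C`.
    have hq : (1 - 2 * δ ^ 2) * R ≤ (1 - δ ^ 2) * R :=
      mul_le_mul_of_nonneg_right (by nlinarith) hR.le
    have hEfar : ∀ x ∈ E, x ∈ far G C := fun x hx =>
      (Finset.mem_union.1 (hEcl.1 hx)).resolve_left fun h =>
        hECS ⟨x, Finset.mem_inter.2 ⟨hx, h⟩⟩
    exact hanti ⟨E, C, ⟨Finset.disjoint_left.2 fun x hx => (mem_far.1 (hEfar x hx)).1,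
      fun x hx => (mem_far.1 (hEfar x hx)).2⟩, hq.trans hEρ', hq.trans hCρ⟩
  have hEsub : E ⊆ C \ S := hEc.subset_of_closedIn hEcl.1 hWcl hECS
  have hEcl' : ClosedIn G (C \ S) E :=
    ⟨hEsub, fun y hy z hz => hEcl.2 y hy z (Finset.mem_union_left _ hz)⟩
  have hEC : E ⊆ C := hEsub.trans Finset.sdiff_subset
  -- `E` is again good: a vertex of `S` is complete to `A'` or `B'`, which is `E` or far from `E`.
  have hcase : ∀ X, ClosedIn G (C \ S) X → Conn G X → X.Nonempty → τ ≤ rhoSub G X →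
      ∀ v, (∀ x ∈ X, G.Adj v x) → (∀ c ∈ E, G.Adj v c) ∨
        ∃ B ⊆ far G E, B.Nonempty ∧ Conn G B ∧ τ ≤ rhoSub G B ∧ ∀ b ∈ B, G.Adj v b := by
    intro X hX hXc hXne hXρ v hv
    rcases eq_or_anticomplete hX hEcl' hXc hEc with rfl | hac
    · exact Or.inl hv
    · exact Or.inr ⟨X, fun x hx => mem_far.2 ⟨Finset.disjoint_left.1 hac.1 hx, hac.2 x hx⟩,
        hXne, hXc, hXρ, hv⟩
  have hEgood : Good G τ ((1 - δ ^ 2) * R) E := by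
    refine ⟨hEne, hEc, hEρ', fun v hvE ⟨e, he, hve⟩ => ?_⟩
    by_cases hvC : v ∈ C
    · have hvS : v ∈ S := by
        by_contra hvS
        exact hvE (hEcl'.2 e he v (Finset.mem_sdiff.2 ⟨hvC, hvS⟩) hve.symm)
      rcases hS v hvS with h | h
      · exact hcase A' hA'cl' hA'c (hAne.mono hAA') hA'ρ v h
      · exact hcase B' hB'cl' hB'c (hBne.mono hBB') hB'ρ v h
    · rcases hCN v hvC ⟨e, hEC he, hve⟩ with h | ⟨X, hX, h⟩
      · exact Or.inl fun c hc => h c (hEC hc)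
      · exact Or.inr ⟨X, hX.trans (far_anti hEC), h⟩
  have hle := hmin E (Finset.mem_filter.2 ⟨Finset.mem_univ _, hEgood⟩)
  have hEeq : E = C := Finset.eq_of_subset_of_card_le hEC hle
  have hsub : ∀ X, ClosedIn G (C \ S) X → X.Nonempty → X = E := by
    intro X hX hXne
    have hXC : X ⊆ E := hEeq ▸ hX.1.trans Finset.sdiff_subset
    exact hEc X ⟨hXC, fun y hy z hz => hX.2 y hy z (hEsub hz)⟩ hXne
  have h1 := hsub A' hA'cl' (hAne.mono hAA')
  have h2 := hsub B' hB'cl' (hBne.mono hBB')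
  obtain ⟨x, hx⟩ := hEne
  exact Finset.disjoint_left.1 hAB'.1 (h1 ▸ hx) (h2 ▸ hx)

end Core

/-! ### The factors `φ` and transfer along embeddings -/

lemma two_pow_two_pow_inv_pos (n : ℕ) : (0 : ℝ) < ((2 : ℝ) ^ (2 ^ n))⁻¹ := by positivity

lemma two_pow_two_pow_inv_le (n : ℕ) : ((2 : ℝ) ^ (2 ^ (n + 1)))⁻¹ ≤ 1 / 4 := by
  rw [one_div]
  refine inv_anti₀ (by norm_num) ?_
  calc (4 : ℝ) = 2 ^ 2 := by norm_num
    _ ≤ 2 ^ (2 ^ (n + 1)) := pow_le_pow_right₀ (by norm_num) (by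
      rw [pow_succ]
      have := Nat.one_le_two_pow (n := n)
      omega)

lemma two_pow_two_pow_inv_add (n m : ℕ) :
    ((2 : ℝ) ^ (2 ^ (n + m)))⁻¹ = ((2 : ℝ) ^ (2 ^ n))⁻¹ ^ (2 ^ m) := by
  rw [pow_add, pow_mul, inv_pow]

lemma phi_succ (s : ℕ) : phi (s + 1) = phi s * (1 - ((2 : ℝ) ^ (2 ^ (s + 2)))⁻¹) := by
  unfold phi
  rw [Finset.prod_Icc_succ_top (by omega)]

lemma phi_pos (s : ℕ) : 0 < phi s := by
  induction s with
  | zero => simp [phi]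
  | succ s ih =>
    rw [phi_succ]
    exact mul_pos ih (by linarith [two_pow_two_pow_inv_le (s + 1)])

lemma phi_le_one (s : ℕ) : phi s ≤ 1 := by
  induction s with
  | zero => simp [phi]
  | succ s ih =>
    rw [phi_succ]
    exact mul_le_one₀ ih (by linarith [two_pow_two_pow_inv_le (s + 1)])
      (by linarith [two_pow_two_pow_inv_pos (s + 2)])

lemma phiRS_succ (r s : ℕ) :
    phiRS r (s + 1) = phiRS r s * (1 - ((2 : ℝ) ^ (2 ^ (s + 2)))⁻¹) := by
  unfold phiRS
  rw [phi_succ, mul_div_right_comm]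

lemma phiRS_self (s : ℕ) : phiRS s s = 1 := div_self (phi_pos s).ne'

lemma phiRS_pos (r s : ℕ) : 0 < phiRS r s := div_pos (phi_pos s) (phi_pos r)

lemma CompletePair.map {V W : Type} {G : SimpleGraph V} {H : SimpleGraph W} (f : H ↪g G)
    {X Y : Finset W} (h : CompletePair H X Y) :
    CompletePair G (X.map f.toEmbedding) (Y.map f.toEmbedding) := by
  refine completePair_of_adj fun x hx y hy => ?_
  obtain ⟨x', hx', rfl⟩ := Finset.mem_map.1 hx
  obtain ⟨y', hy', rfl⟩ := Finset.mem_map.1 hy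
  exact f.map_rel_iff.2 (h.2 x' hx' y' hy')

lemma AnticompletePair.map {V W : Type} {G : SimpleGraph V} {H : SimpleGraph W} (f : H ↪g G)
    {X Y : Finset W} (h : AnticompletePair H X Y) :
    AnticompletePair G (X.map f.toEmbedding) (Y.map f.toEmbedding) := by
  refine ⟨(Finset.disjoint_map _).2 h.1, fun x hx y hy => ?_⟩
  obtain ⟨x', hx', rfl⟩ := Finset.mem_map.1 hx
  obtain ⟨y', hy', rfl⟩ := Finset.mem_map.1 hy
  exact fun hadj => h.2 x' hx' y' hy' (f.map_rel_iff.1 hadj)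

lemma CompleteBlockade.map {V W : Type} {G : SimpleGraph V} {H : SimpleGraph W} (f : H ↪g G)
    {k : ℕ} {B : Fin k → Finset W} (h : CompleteBlockade H B) :
    CompleteBlockade G fun i => (B i).map f.toEmbedding := by
  have := fun i j hij => CompletePair.map f (X := B i) (Y := B j) ⟨h.1 i j hij, h.2 i j hij⟩
  exact ⟨fun i j hij => (this i j hij).1, fun i j hij => (this i j hij).2⟩

/-- If `a ≥ 8` has the property of Statement 12, then for every integer
`s ≥ 0`, every `P₅`-free graph `G` with `ω(G) ≥ 2` contains an anticomplete pair `(A,B)`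
with `ρ(A), ρ(B) ≥ (1−2^{1−2^{s+1}})ρ(G)`, or a complete pair `(X,Y)` with
`ρ(X) ≥ φ_{r,s}·2^{−2^{r+3}}·ρ(G)` and `ρ(Y) ≥ φ_{r,s}·(1−(5/2)·2^{−2^r})·ρ(G)` for some
`1 ≤ r ≤ s`, or a complete blockade `(B₁,…,B_k)` with `k ≥ 2` and
`ρ(Bᵢ) ≥ φ_s·k⁻ᵃ·ρ(G)` for all `i`. -/
theorem stmt_13 (a : ℕ) (ha : 8 ≤ a)
    (h : ∀ ε : ℝ, 0 < ε → ε ≤ 1/2 →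
      ∀ (V : Type) [Fintype V] (G : SimpleGraph V), P5Free G → 2 ≤ omegaNum G →
        (∃ A B : Finset V, AnticompletePair G A B ∧
          (1 - ε) * rho G ≤ rhoSub G A ∧ (1 - ε) * rho G ≤ rhoSub G B) ∨
        (∃ X Y : Finset V, CompletePair G X Y ∧
          ε ^ a * rho G ≤ rhoSub G X ∧ ((2:ℝ) ^ a)⁻¹ * rho G ≤ rhoSub G Y) ∨
        (∃ (k : ℕ) (B : Fin k → Finset V), 1/ε ≤ (k : ℝ) ∧ CompleteBlockade G B ∧
          ∀ i, ((k : ℝ) ^ a)⁻¹ * rho G ≤ rhoSub G (B i))) :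
    ∀ s : ℕ, ∀ (V : Type) [Fintype V] (G : SimpleGraph V), P5Free G → 2 ≤ omegaNum G →
      (∃ A B : Finset V, AnticompletePair G A B ∧
        (1 - 2 * ((2:ℝ) ^ (2 ^ (s+1)))⁻¹) * rho G ≤ rhoSub G A ∧
        (1 - 2 * ((2:ℝ) ^ (2 ^ (s+1)))⁻¹) * rho G ≤ rhoSub G B) ∨
      (∃ r : ℕ, 1 ≤ r ∧ r ≤ s ∧ ∃ X Y : Finset V, CompletePair G X Y ∧
        phiRS r s * ((2:ℝ) ^ (2 ^ (r+3)))⁻¹ * rho G ≤ rhoSub G X ∧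
        phiRS r s * (1 - (5/2) * ((2:ℝ) ^ (2 ^ r))⁻¹) * rho G ≤ rhoSub G Y) ∨
      (∃ (k : ℕ) (B : Fin k → Finset V), 2 ≤ k ∧ CompleteBlockade G B ∧
        ∀ i, phi s * ((k : ℝ) ^ a)⁻¹ * rho G ≤ rhoSub G (B i)) := by
  intro s
  induction s with
  | zero =>
    intro V _ G hG hω
    rcases h (1 / 2) (by norm_num) le_rfl V G hG hω with
      ⟨A, B, hAB, hA, hB⟩ | ⟨X, Y, hXY, hX, hY⟩ | ⟨k, B, hk, hB, hBi⟩
    · refine Or.inl ⟨A, B, hAB, le_trans (le_of_eq ?_) hA, le_trans (le_of_eq ?_) hB⟩ <;> norm_num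
    · -- the two sides of the pair form a blockade of length two
      refine Or.inr (Or.inr ⟨2, ![X, Y], le_rfl, ⟨?_, ?_⟩, ?_⟩)
      · intro i j hij
        fin_cases i <;> fin_cases j
        · exact absurd rfl hij
        · exact hXY.1
        · exact hXY.1.symm
        · exact absurd rfl hij
      · intro i j hij
        fin_cases i <;> fin_cases j
        · exact absurd rfl hij
        · exact hXY.2
        · exact fun y hy x hx => (hXY.2 x hx y hy).symm
        · exact absurd rfl hij
      · intro i
        fin_cases i
        · simpa [phi] using hX
        · simpa [phi] using hY
    · refine Or.inr (Or.inr ⟨k, B, ?_, hB, fun i => ?_⟩)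
      · norm_num at hk
        exact hk
      · simpa [phi] using hBi i
  | succ t ih =>
    intro V _ G hG hω
    classical
    by_contra hno
    rw [not_or, not_or] at hno
    obtain ⟨hanti, hpair, hblk⟩ := hno
    set R := rho G with hRdef
    have hR2 : 2 ≤ R := two_le_rho G hω
    have hR : 0 < R := by linarith
    set δ : ℝ := ((2 : ℝ) ^ (2 ^ (t + 1)))⁻¹ with hδdef
    have hδ : 0 < δ := two_pow_two_pow_inv_pos _
    have hδ4 : δ ≤ 1 / 4 := two_pow_two_pow_inv_le _
    have hδ2 : ((2 : ℝ) ^ (2 ^ (t + 2)))⁻¹ = δ ^ 2 := two_pow_two_pow_inv_add (t + 1) 1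
    have hδ8 : ((2 : ℝ) ^ (2 ^ (t + 4)))⁻¹ = δ ^ 8 := two_pow_two_pow_inv_add (t + 1) 3
    have hδsq : δ ^ 2 ≤ 1 / 16 := by nlinarith
    refine hG.false_of_sparse hR rfl hδ hδ4 rfl ?_ ?_ ?_ ?_
    · intro F hF
      obtain ⟨u, hu, v, hv, huv⟩ := exists_adj_of_one_lt_rhoSub G (S := F) (by nlinarith)
      let f : G.induce (↑F : Set V) ↪g G := SimpleGraph.Embedding.induce (↑F : Set V)
      have hfF : ∀ X : Finset (↑F : Set V), X.map f.toEmbedding ⊆ F := by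
        intro X x hx
        obtain ⟨y, -, rfl⟩ := Finset.mem_map.1 hx
        exact y.2
      have hFfree : P5Free (G.induce (↑F : Set V)) := ⟨fun g => hG.false (g.trans f)⟩
      have hFω : 2 ≤ omegaNum (G.induce (↑F : Set V)) :=
        two_le_omegaNum_of_adj _ (u := ⟨u, hu⟩) (v := ⟨v, hv⟩) huv
      have hF' : (1 - δ ^ 2) * R ≤ rho (G.induce (↑F : Set V)) := hF
      rcases ih _ (G.induce (↑F : Set V)) hFfree hFω with
        ⟨A, B, hAB, hA, hB⟩ | ⟨r, hr, hrt, X, Y, hXY, hX, hY⟩ | ⟨k, B, hk, hB, hBi⟩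
      · have key : (1 - 5 / 2 * δ) * R ≤ (1 - 2 * δ) * rho (G.induce (↑F : Set V)) := by
          have h1 := mul_le_mul_of_nonneg_left hF' (show 0 ≤ 1 - 2 * δ by linarith)
          have h2 : 1 - 5 / 2 * δ ≤ (1 - 2 * δ) * (1 - δ ^ 2) := by
            nlinarith [pow_pos hδ 3]
          have h3 := mul_le_mul_of_nonneg_right h2 hR.le
          linarith
        refine ⟨A.map f.toEmbedding, B.map f.toEmbedding, hfF A, hfF B, hAB.map f, ?_, ?_⟩
        · rw [← rhoSub_map]; exact key.trans hA
        · rw [← rhoSub_map]; exact key.trans hB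
      · refine absurd ⟨r, hr, by omega, X.map f.toEmbedding, Y.map f.toEmbedding, hXY.map f,
          ?_, ?_⟩ hpair
        · rw [← rhoSub_map, phiRS_succ, hδ2]
          refine le_trans ?_ hX
          have := mul_le_mul_of_nonneg_left hF' (mul_pos (phiRS_pos r t)
            (two_pow_two_pow_inv_pos (r + 3))).le
          linarith
        · rw [← rhoSub_map, phiRS_succ, hδ2]
          refine le_trans ?_ hY
          obtain ⟨r, rfl⟩ : ∃ r', r = r' + 1 := ⟨r - 1, by omega⟩
          have := mul_le_mul_of_nonneg_left hF' (mul_pos (phiRS_pos (r + 1) t)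
            (show 0 < 1 - (5 / 2) * ((2 : ℝ) ^ (2 ^ (r + 1)))⁻¹ by
              linarith [two_pow_two_pow_inv_le r])).le
          linarith
      · refine absurd ⟨k, fun i => (B i).map f.toEmbedding, hk, hB.map f, fun i => ?_⟩ hblk
        rw [← rhoSub_map, phi_succ, hδ2]
        refine le_trans ?_ (hBi i)
        have := mul_le_mul_of_nonneg_left hF' (mul_nonneg (phi_pos t).le
          (show 0 ≤ ((k : ℝ) ^ a)⁻¹ by positivity))
        linarith
    · intro X Y hXY hY
      by_contra! hX
      refine hpair ⟨t + 1, by omega, le_rfl, X, Y, hXY, ?_, ?_⟩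
      · rw [phiRS_self, hδ8, one_mul]; exact hX
      · rw [phiRS_self, one_mul]; exact hY
    · rintro ⟨k, B, hk, hB, hBi⟩
      refine hblk ⟨k, B, hk, hB, fun i => le_trans ?_ (hBi i)⟩
      refine mul_le_mul_of_nonneg_right ?_ hR.le
      have hk1 : (1 : ℝ) ≤ k := by exact_mod_cast (by omega : 1 ≤ k)
      calc phi (t + 1) * ((k : ℝ) ^ a)⁻¹ ≤ 1 * ((k : ℝ) ^ a)⁻¹ := by
            gcongr; exact phi_le_one _
        _ = ((k : ℝ) ^ a)⁻¹ := one_mul _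
        _ ≤ ((k : ℝ) ^ 8)⁻¹ := inv_anti₀ (by positivity) (pow_le_pow_right₀ hk1 ha)
    · rintro ⟨A, B, hAB, hA, hB⟩
      exact hanti ⟨A, B, hAB, by rw [hδ2]; exact hA, by rw [hδ2]; exact hB⟩
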